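/- Let Q be a commutative Moufang loop and let α, β be automorphisms of Q with x+α(x) ∈ Z(Q) and x+β(x) ∈ Z(Q) for all x (i.e., α and β are J-central). Then: (i) x - (α(x)+β(x)) ∈ Z(Q) for every x ∈ Q; and (ii) for every automorphism γ of Q commuting with both α and β, and for all u, v ∈ Z(Q), if u = v + (x - (α(x)+β(x))) for some x ∈ Q, then γ(u) = γ(v) + (y - (α(y)+β(y))) for some y ∈ Q. -/

import Mathlib

/-- A loop: a quasigroup with a two-sided neutral element. -/
structure Loop (Q : Type) where
  add : Q → Q → Q
  zero : Q
  addLeftBij : ∀ x, Function.Bijective fun y => add x y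
  addRightBij : ∀ x, Function.Bijective fun y => add y x
  zero_add : ∀ x, add zero x = x
  add_zero : ∀ x, add x zero = x

namespace Loop

/-- The center of a loop: elements commuting and associating with everything. -/
def center {Q : Type} (L : Loop Q) : Set Q :=
  {z | (∀ x, L.add z x = L.add x z) ∧
       (∀ x y, L.add z (L.add x y) = L.add (L.add z x) y) ∧
       (∀ x y, L.add x (L.add z y) = L.add (L.add x z) y) ∧
       (∀ x y, L.add x (L.add y z) = L.add (L.add x y) z)}

/-- A map `α` is central if `Z(Q) + α(x) = Z(Q) + x` for every `x`. -/
def IsCentral {Q : Type} (L : Loop Q) (α : Q → Q) : Prop :=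
  ∀ x, (fun z => L.add z (α x)) '' L.center = (fun z => L.add z x) '' L.center

/-- Automorphism of a loop: a bijective map respecting the operation. -/
def IsAut {Q : Type} (L : Loop Q) (f : Q → Q) : Prop :=
  Function.Bijective f ∧ ∀ x y, f (L.add x y) = L.add (f x) (f y)

/-- `neg` provides two-sided inverses for the loop. -/
def IsTwoSidedInv {Q : Type} (L : Loop Q) (neg : Q → Q) : Prop :=
  ∀ x, L.add x (neg x) = L.zero ∧ L.add (neg x) x = L.zero

/-- Commutative Moufang loop: commutative and satisfying the Moufang identity. -/
def IsCommMoufang {Q : Type} (L : Loop Q) : Prop :=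
  (∀ x y, L.add x y = L.add y x) ∧
  (∀ x y z, L.add x (L.add y (L.add x z)) = L.add (L.add (L.add x y) x) z)

end Loop

namespace Loop

theorem mem_center_of {Q : Type} (L : Loop Q) (hc : ∀ x y, L.add x y = L.add y x) (z : Q)
    (hz : ∀ x y, L.add z (L.add x y) = L.add (L.add z x) y) : z ∈ L.center := by
  refine ⟨fun x => hc z x, hz, fun x y => ?_, fun x y => ?_⟩
  · rw [hc x (L.add z y), hc x z, ← hz, ← hz, hc x y]
  · rw [hc y z, hc x (L.add z y), ← hz, hc (L.add x y) z, hc x y]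

theorem lip {Q : Type} (L : Loop Q) (h : L.IsCommMoufang) (neg : Q → Q)
    (hneg : L.IsTwoSidedInv neg) (x z : Q) : L.add (neg x) (L.add x z) = z := by
  apply (L.addLeftBij x).1
  change L.add x (L.add (neg x) (L.add x z)) = L.add x z
  rw [h.2, (hneg x).1, L.zero_add]

theorem neg_unique {Q : Type} (L : Loop Q) (neg : Q → Q)
    (hneg : L.IsTwoSidedInv neg) (x y : Q) (hxy : L.add x y = L.zero) : y = neg x := by
  apply (L.addLeftBij x).1
  change L.add x y = L.add x (neg x)
  rw [hxy, (hneg x).1]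

theorem neg_neg' {Q : Type} (L : Loop Q) (neg : Q → Q)
    (hneg : L.IsTwoSidedInv neg) (x : Q) : neg (neg x) = x :=
  (L.neg_unique neg hneg (neg x) x (hneg x).2).symm

theorem lip' {Q : Type} (L : Loop Q) (h : L.IsCommMoufang) (neg : Q → Q)
    (hneg : L.IsTwoSidedInv neg) (x z : Q) : L.add x (L.add (neg x) z) = z := by
  have := L.lip h neg hneg (neg x) z
  rwa [L.neg_neg' neg hneg] at this

theorem neg_add' {Q : Type} (L : Loop Q) (h : L.IsCommMoufang) (neg : Q → Q)
    (hneg : L.IsTwoSidedInv neg) (x y : Q) : neg (L.add x y) = L.add (neg x) (neg y) := by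
  have h1 := L.lip h neg hneg x y
  have h2 : L.add (L.add (neg x) (L.add x y)) (neg (L.add x y)) = neg x := by
    rw [h.1 (neg x), h.1 _ (neg _)]
    exact L.lip h neg hneg (L.add x y) (neg x)
  rw [h1] at h2
  rw [← h2, h.1 _ (neg y), L.lip h neg hneg]

theorem atp2 {Q : Type} (L : Loop Q) (h : L.IsCommMoufang) (neg : Q → Q)
    (hneg : L.IsTwoSidedInv neg) (x y w : Q) :
    L.add x (L.add y w) = L.add (L.add (L.add x x) y) (L.add (neg x) w) := by
  have h0 : L.add x (L.add x y) = L.add (L.add x x) y := by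
    have := h.2 x L.zero y
    rwa [L.zero_add, L.add_zero] at this
  rw [← h0, h.1 x (L.add x y), h.1 (L.add x y) x, h.1 x (L.add x y), ← h.2, L.lip' h neg hneg]

theorem atp1 {Q : Type} (L : Loop Q) (h : L.IsCommMoufang) (neg : Q → Q)
    (hneg : L.IsTwoSidedInv neg) (x u v : Q) :
    L.add (L.add x x) (L.add u v) = L.add (L.add x u) (L.add x v) := by
  have h1 := L.atp2 h neg hneg x (L.add u v) (neg v)
  have h2 : L.add (L.add u v) (neg v) = u := by
    rw [h.1 _ (neg v), h.1 u v, L.lip h neg hneg]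
  rw [h2, ← L.neg_add' h neg hneg] at h1
  rw [h1, h.1 _ (L.add x v), h.1 _ (neg _), L.lip' h neg hneg]

theorem three_center {Q : Type} (L : Loop Q) (h : L.IsCommMoufang) (neg : Q → Q)
    (hneg : L.IsTwoSidedInv neg) (x : Q) : L.add x (L.add x x) ∈ L.center := by
  have key : ∀ u v, L.add (L.add x (L.add (L.add x x) u)) v
      = L.add (L.add x x) (L.add x (L.add u v)) := by
    intro u v
    rw [L.atp2 h neg hneg x u v, L.atp1 h neg hneg, L.lip' h neg hneg]
  have k1 : ∀ v, L.add (L.add x (L.add x x)) v = L.add (L.add x x) (L.add x v) := by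
    intro v
    have := key L.zero v
    rwa [L.zero_add, L.add_zero] at this
  have k2 : ∀ u, L.add x (L.add (L.add x x) u) = L.add (L.add x x) (L.add x u) := by
    intro u
    have := key u L.zero
    rwa [L.add_zero, L.add_zero] at this
  apply L.mem_center_of h.1
  intro u v
  rw [k1, k1, ← k2 u, key]

theorem add_center {Q : Type} (L : Loop Q) (hc : ∀ x y, L.add x y = L.add y x) (a b : Q)
    (ha : a ∈ L.center) (hb : b ∈ L.center) : L.add a b ∈ L.center := by
  apply L.mem_center_of hc
  intro x y
  rw [← ha.2.1, hb.2.1, ha.2.1 (L.add b x) y, ha.2.1 b x]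

theorem neg_center {Q : Type} (L : Loop Q) (h : L.IsCommMoufang) (neg : Q → Q)
    (hneg : L.IsTwoSidedInv neg) (a : Q) (ha : a ∈ L.center) : neg a ∈ L.center := by
  apply L.mem_center_of h.1
  intro x y
  apply (L.addLeftBij a).1
  change L.add a _ = L.add a _
  rw [L.lip' h neg hneg, ha.2.1, L.lip' h neg hneg]

end Loop

open Loop in
/-- For J-central automorphisms `α`, `β` of a commutative Moufang loop,
`x - (α(x)+β(x))` is central, and automorphisms commuting with `α` and `β`
act on the center modulo the image of `id - (α+β)`. -/
theorem stmt {Q : Type} (L : Loop Q) (h : L.IsCommMoufang)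
    (neg : Q → Q) (hneg : L.IsTwoSidedInv neg)
    (α β : Q → Q) (hα : L.IsAut α) (hβ : L.IsAut β)
    (hαc : ∀ x, L.add x (α x) ∈ L.center)
    (hβc : ∀ x, L.add x (β x) ∈ L.center) :
    (∀ x, L.add x (neg (L.add (α x) (β x))) ∈ L.center) ∧
    (∀ γ : Q → Q, L.IsAut γ → (∀ x, γ (α x) = α (γ x)) →
      (∀ x, γ (β x) = β (γ x)) →
      ∀ u ∈ L.center, ∀ v ∈ L.center,
        (∃ x, u = L.add v (L.add x (neg (L.add (α x) (β x))))) →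
        ∃ y, γ u = L.add (γ v) (L.add y (neg (L.add (α y) (β y))))) := by
  constructor
  · intro x
    have h1 := L.atp1 h neg hneg x (α x) (β x)
    have h2 := L.add_center h.1 _ _ (hαc x) (hβc x)
    rw [← h1] at h2
    have h3 := L.neg_center h neg hneg _ h2
    have h4 : neg (L.add (α x) (β x))
        = L.add (L.add x x) (neg (L.add (L.add x x) (L.add (α x) (β x)))) := by
      rw [L.neg_add' h neg hneg (L.add x x), L.lip' h neg hneg]
    rw [h4, h3.2.2.2]
    exact L.add_center h.1 _ _ (L.three_center h neg hneg x) h3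
  · rintro γ hγ hγα hγβ u - v - ⟨x, rfl⟩
    refine ⟨γ x, ?_⟩
    have h0 : γ L.zero = L.zero := by
      apply (L.addLeftBij (γ L.zero)).1
      change L.add (γ L.zero) (γ L.zero) = L.add (γ L.zero) L.zero
      rw [← hγ.2, L.add_zero, L.add_zero]
    have hn : ∀ a, γ (neg a) = neg (γ a) := by
      intro a
      apply L.neg_unique neg hneg
      rw [← hγ.2, (hneg a).1, h0]
    rw [hγ.2, hγ.2, hn, hγ.2, hγα, hγβ]
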